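/- Let A be a reduced commutative Noetherian ring and let V be an A-module. The following are equivalent: (1) every associated prime of V is a minimal prime of A; (2) the natural map V → V ⊗_A K(A) is injective, where K(A) is the product of the residue fields of the minimal primes of A; (3) the natural map from V to the product over minimal primes a of A of the maximal A/a-torsion-free quotients of V/aV is injective. -/

import Mathlib

open TensorProduct

/-- The Prop that `v` dies in the localization at `a`. -/
def DiesAt {A V : Type*} [CommRing A] [AddCommGroup V] [Module A V]
    (a : Ideal A) (v : V) : Prop := ∃ s : A, s ∉ a ∧ s • v = 0

theorem exists_notMem_mul_eq_zero {A : Type*} [CommRing A] [IsReduced A] {a : Ideal A}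
    (ha : a ∈ minimalPrimes A) {x : A} (hx : x ∈ a) : ∃ s, s ∉ a ∧ s * x = 0 := by
  have : a.IsPrime := ha.1.1
  by_contra hcon
  push Not at hcon
  have hd : Disjoint ((⊥ : Ideal A) : Set A)
      ((a.primeCompl ⊔ Submonoid.powers x : Submonoid A) : Set A) := by
    rw [Set.disjoint_left]
    rintro y hy hy'
    obtain ⟨s, hs, z, ⟨n, rfl⟩, h⟩ := Submonoid.mem_sup.1 hy'
    have hy0 : y = 0 := by simpa using hy
    have h0 : s * x ^ n = 0 := by rw [← hy0]; exact h
    have h1 : (s * x) ^ (n + 1) = 0 := by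
      have : (s * x) ^ (n + 1) = s ^ n * x * (s * x ^ n) := by ring
      rw [this, h0, mul_zero]
    exact hcon s hs (eq_zero_of_pow_eq_zero h1)
  obtain ⟨q, hq, -, hqd⟩ := Ideal.exists_le_prime_disjoint _ _ hd
  rw [Set.disjoint_left] at hqd
  have hqa : q ≤ a := by
    intro y hy
    by_contra hya
    exact hqd hy (Submonoid.mem_sup_left (show y ∈ a.primeCompl from hya))
  have := ha.2 ⟨hq, bot_le⟩ hqa hx
  exact hqd this (Submonoid.mem_sup_right (Submonoid.mem_powers x))

theorem diesAt_of_smul_mem {A V : Type*} [CommRing A] [IsReduced A] [AddCommGroup V] [Module A V]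
    {a : Ideal A} (ha : a ∈ minimalPrimes A) {w : V} (hw : w ∈ a • (⊤ : Submodule A V)) :
    DiesAt a w := by
  have : a.IsPrime := ha.1.1
  induction hw using Submodule.smul_induction_on' with
  | smul r hr n hn =>
    obtain ⟨s, hs, h⟩ := exists_notMem_mul_eq_zero ha hr
    exact ⟨s, hs, by rw [smul_smul, h, zero_smul]⟩
  | add x hx y hy h1 h2 =>
    obtain ⟨s, hs, h⟩ := h1
    obtain ⟨t, ht, h'⟩ := h2
    refine ⟨s * t, a.primeCompl.mul_mem hs ht, ?_⟩
    rw [smul_add, mul_smul, mul_smul, h', smul_zero, add_zero, smul_comm, h, smul_zero]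

theorem tensor_iff_aux {A V K : Type*} [CommRing A] [AddCommGroup V] [Module A V]
    [CommRing K] [Algebra A K] (a : Ideal A) [a.IsPrime] [IsLocalization a.primeCompl K] (v : V) :
    ((1 : K) ⊗ₜ[A] v : K ⊗[A] V) = 0 ↔ DiesAt a v := by
  refine Iff.trans (IsLocalizedModule.eq_zero_iff a.primeCompl
    (TensorProduct.mk A K V 1) (m := v)) ⟨?_, ?_⟩
  · rintro ⟨s, h⟩
    exact ⟨s.1, s.2, h⟩
  · rintro ⟨s, hs, h⟩
    exact ⟨⟨s, hs⟩, h⟩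

theorem tensor_iff {A V : Type*} [CommRing A] [IsReduced A] [AddCommGroup V] [Module A V]
    {a : Ideal A} (ha : a ∈ minimalPrimes A) (v : V) :
    have : a.IsPrime := ha.1.1
    ((1 : FractionRing (A ⧸ a)) ⊗ₜ[A] v : FractionRing (A ⧸ a) ⊗[A] V) = 0 ↔ DiesAt a v := by
  have : a.IsPrime := ha.1.1
  have hmap : ∀ x : A, algebraMap A (FractionRing (A ⧸ a)) x =
      algebraMap (A ⧸ a) (FractionRing (A ⧸ a)) (Ideal.Quotient.mk a x) := 
    fun x => IsScalarTower.algebraMap_apply A (A ⧸ a) (FractionRing (A ⧸ a)) x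
  have hz : ∀ x : A, algebraMap A (FractionRing (A ⧸ a)) x = 0 ↔ x ∈ a := by
    intro x
    rw [hmap, FaithfulSMul.algebraMap_eq_zero_iff, Ideal.Quotient.eq_zero_iff_mem]
  have : IsLocalization a.primeCompl (FractionRing (A ⧸ a)) := by
    refine ⟨⟨?_, ?_, ?_⟩⟩
    · rintro ⟨s, hs⟩
      exact isUnit_iff_ne_zero.2 fun h => hs ((hz s).1 h)
    · intro z
      obtain ⟨x, y, hy, rfl⟩ := IsFractionRing.div_surjective (A := A ⧸ a) z
      obtain ⟨x, rfl⟩ := Ideal.Quotient.mk_surjective x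
      obtain ⟨y, rfl⟩ := Ideal.Quotient.mk_surjective y
      have hya : y ∉ a := fun h => nonZeroDivisors.ne_zero hy (Ideal.Quotient.eq_zero_iff_mem.2 h)
      refine ⟨⟨x, ⟨y, hya⟩⟩, ?_⟩
      rw [hmap, hmap]
      exact div_mul_cancel₀ _ fun h => hya ((hz y).1 ((hmap y).trans h))
    · intro x y h
      have hxy : x - y ∈ a := by rw [← hz, map_sub, h, sub_self]
      obtain ⟨s, hs, h⟩ := exists_notMem_mul_eq_zero ha hxy
      exact ⟨⟨s, hs⟩, by rwa [mul_sub, sub_eq_zero] at h⟩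
  exact tensor_iff_aux (K := FractionRing (A ⧸ a)) a v

theorem torsion_iff {A V : Type*} [CommRing A] [IsReduced A] [AddCommGroup V] [Module A V]
    {a : Ideal A} (ha : a ∈ minimalPrimes A) (v : V) :
    (Submodule.Quotient.mk v : V ⧸ (a • (⊤ : Submodule A V))) ∈
      Submodule.torsion (A ⧸ a) (V ⧸ (a • (⊤ : Submodule A V))) ↔ DiesAt a v := by
  have : a.IsPrime := ha.1.1
  rw [Submodule.mem_torsion_iff]
  constructor
  · rintro ⟨⟨s, hs⟩, h⟩
    obtain ⟨s, rfl⟩ := Ideal.Quotient.mk_surjective s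
    have hsa : s ∉ a := fun h => nonZeroDivisors.ne_zero hs (Ideal.Quotient.eq_zero_iff_mem.2 h)
    have h' : (Submodule.Quotient.mk (s • v) : V ⧸ (a • (⊤ : Submodule A V))) = 0 := h
    rw [Submodule.Quotient.mk_eq_zero] at h'
    obtain ⟨t, ht, h2⟩ := diesAt_of_smul_mem ha h'
    exact ⟨t * s, a.primeCompl.mul_mem ht hsa, by rw [mul_smul, h2]⟩
  · rintro ⟨s, hs, h⟩
    refine ⟨⟨Ideal.Quotient.mk a s, mem_nonZeroDivisors_of_ne_zero
      fun h => hs (Ideal.Quotient.eq_zero_iff_mem.1 h)⟩, ?_⟩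
    change (Submodule.Quotient.mk (s • v) : V ⧸ (a • (⊤ : Submodule A V))) = 0
    rw [h, Submodule.Quotient.mk_zero]

theorem ass_iff {A V : Type*} [CommRing A] [IsNoetherianRing A] [AddCommGroup V] [Module A V] :
    (∀ p ∈ associatedPrimes A V, p ∈ minimalPrimes A) ↔
      ∀ v : V, (∀ a ∈ minimalPrimes A, DiesAt a v) → v = 0 := by
  constructor
  · intro h v hv
    by_contra hv0
    obtain ⟨P, hP, hle⟩ := exists_le_isAssociatedPrime_of_isNoetherianRing A v hv0
    obtain ⟨s, hs, hsv⟩ := hv P (h P hP)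
    exact hs (hle (by rw [Submodule.mem_colon_singleton, hsv]; exact zero_mem _))
  · intro h p hp
    obtain ⟨hpp, v, hv⟩ := isAssociatedPrime_iff.1 hp
    have hv0 : v ≠ 0 := by
      rintro rfl
      apply hpp.ne_top
      rw [hv, Ideal.eq_top_iff_one, Submodule.mem_colon_singleton, smul_zero]
      exact zero_mem _
    by_contra hpm
    refine hv0 (h v fun a ha => ?_)
    by_contra hd
    have hpa : p ≤ a := by
      intro s hs
      by_contra hsa
      rw [hv, Submodule.mem_colon_singleton, Submodule.mem_bot] at hs
      exact hd ⟨s, hsa, hs⟩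
    have : p = a := le_antisymm hpa (ha.2 ⟨hpp, bot_le⟩ hpa)
    exact hpm (this ▸ ha)

/-- Let `A` be a reduced commutative Noetherian ring and `V` an `A`-module.
The following are equivalent: (1) every associated prime of `V` is a minimal prime of `A`;
(2) the natural map `V → V ⊗_A K(A)` is injective, where `K(A)` is the product of the
residue fields `κ(a) = Frac(A/a)` of the minimal primes `a` of `A` (expressed here as the
injectivity of the diagonal map `v ↦ (v ⊗ 1)_a` into the product of the `V ⊗_A κ(a)`);
(3) the natural map from `V` to the product over minimal primes `a` of the maximal
`A/a`-torsion-free quotients of `V/aV` is injective. -/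
theorem torsion_free_tfae
    (A : Type*) [CommRing A] [IsNoetherianRing A] [IsReduced A]
    (V : Type*) [AddCommGroup V] [Module A V] :
    List.TFAE [
      (∀ p ∈ associatedPrimes A V, p ∈ minimalPrimes A),
      Function.Injective (fun (v : V) (a : {p : Ideal A // p ∈ minimalPrimes A}) =>
        letI : a.1.IsPrime := a.2.1.1
        letI : Algebra A (FractionRing (A ⧸ a.1)) :=
          ((algebraMap (A ⧸ a.1) (FractionRing (A ⧸ a.1))).comp
            (Ideal.Quotient.mk a.1)).toAlgebra
        ((1 : FractionRing (A ⧸ a.1)) ⊗ₜ[A] v : FractionRing (A ⧸ a.1) ⊗[A] V)),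
      Function.Injective (fun (v : V) (a : {p : Ideal A // p ∈ minimalPrimes A}) =>
        (Submodule.Quotient.mk
            (Submodule.Quotient.mk v :
              V ⧸ (a.1 • (⊤ : Submodule A V))) :
          (V ⧸ (a.1 • (⊤ : Submodule A V))) ⧸
            Submodule.torsion (A ⧸ a.1) (V ⧸ (a.1 • (⊤ : Submodule A V)))))] := by
  have key : ∀ u v : V, (∀ a ∈ minimalPrimes A, DiesAt a (u - v)) ↔
      ∀ a : {p : Ideal A // p ∈ minimalPrimes A}, DiesAt a.1 (u - v) :=
    fun u v => ⟨fun h a => h a.1 a.2, fun h a ha => h ⟨a, ha⟩⟩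
  have red : ∀ P : Prop, (P ↔ ∀ u v : V,
      (∀ a : {p : Ideal A // p ∈ minimalPrimes A}, DiesAt a.1 (u - v)) → u = v) →
      ((∀ p ∈ associatedPrimes A V, p ∈ minimalPrimes A) ↔ P) := by
    intro P hP
    rw [hP, ass_iff]
    constructor
    · intro h u v huv
      exact sub_eq_zero.1 (h _ ((key u v).2 huv))
    · intro h v hv
      exact h v 0 fun a => by rw [sub_zero]; exact hv a.1 a.2
  tfae_have 1 ↔ 2 := by
    apply red
    refine forall₂_congr fun u v => imp_congr_left ?_
    rw [funext_iff]
    refine forall_congr' fun a => ?_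
    refine Iff.trans ?_ (tensor_iff a.2 (u - v))
    rw [TensorProduct.tmul_sub, sub_eq_zero]
  tfae_have 1 ↔ 3 := by
    apply red
    refine forall₂_congr fun u v => imp_congr_left ?_
    rw [funext_iff]
    refine forall_congr' fun a => ?_
    refine Iff.trans ?_ (torsion_iff a.2 (u - v))
    exact Submodule.Quotient.eq _
  tfae_finish
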